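/- Let λ = √((5+√13)/2), ρ = (−√(λ²−4) + i·√(8−λ²))/2 and τ = (−√(λ²−1) − i·√(5−λ²))/2, and let u₂ = (√(λ²−2)/3, √(λ²−2)/(√3·λ), −(λ²−3)/√3), u₃ = ((λ²−2)/(√3·λ), −(λ²−2)/3, 0) in ℂ³. Then the vector f = (ρ/(λ(λ²−2)), τ/√3, 1/(λ²−2)) ∈ ℂ³ satisfies f = −(1/√3)·u₂ + (√(λ²−2)/(2λ) + i·(λ²−3)/(2λ))·u₃, and its complex conjugate satisfies conj(f) = −(1/√3)·u₂ + (√(λ²−2)/(2λ) − i·(λ²−3)/(2λ))·u₃. -/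

import Mathlib

/-!
Everything follows from `(λ² - 2)(λ² - 3) = 3`, a form of the minimal equation of `λ`. Through
it, the four radicals in `ρ` and `τ` become rational expressions in `λ`, `√3` and `√(λ² - 2)`, and
the expansion of `f` reduces coordinatewise to the same relation. Since `u₂` and `u₃` are real
vectors, conjugating `f` only conjugates the coefficients of its expansion.
-/

namespace AsaedaHaagerupStmt5

noncomputable def lam : ℝ := Real.sqrt ((5 + Real.sqrt 13) / 2)

noncomputable def rho : ℂ :=
  (-Complex.ofReal (Real.sqrt (lam ^ 2 - 4)) +
    Complex.ofReal (Real.sqrt (8 - lam ^ 2)) * Complex.I) / 2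

noncomputable def tau : ℂ :=
  (-Complex.ofReal (Real.sqrt (lam ^ 2 - 1)) -
    Complex.ofReal (Real.sqrt (5 - lam ^ 2)) * Complex.I) / 2

noncomputable def u2 : Fin 3 → ℂ :=
  ![Complex.ofReal (Real.sqrt (lam ^ 2 - 2) / 3),
    Complex.ofReal (Real.sqrt (lam ^ 2 - 2) / (Real.sqrt 3 * lam)),
    Complex.ofReal (-((lam ^ 2 - 3) / Real.sqrt 3))]

noncomputable def u3 : Fin 3 → ℂ :=
  ![Complex.ofReal ((lam ^ 2 - 2) / (Real.sqrt 3 * lam)),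
    Complex.ofReal (-((lam ^ 2 - 2) / 3)), 0]

noncomputable def f : Fin 3 → ℂ :=
  ![rho / (Complex.ofReal lam * Complex.ofReal (lam ^ 2 - 2)),
    tau / Complex.ofReal (Real.sqrt 3),
    Complex.ofReal (1 / (lam ^ 2 - 2))]

/-- The coefficient of `u3` in the expansion of `f`; that of `u2` is the real number `-1 / √3`. -/
noncomputable def u3Coeff : ℂ :=
  Complex.ofReal (√(lam ^ 2 - 2) / (2 * lam)) +
    Complex.ofReal ((lam ^ 2 - 3) / (2 * lam)) * Complex.I

theorem lam_pos : 0 < lam :=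
  Real.sqrt_pos.mpr (by positivity)

theorem lam_sq : lam ^ 2 = (5 + √13) / 2 :=
  Real.sq_sqrt (by positivity)

theorem three_lt_lam_sq : 3 < lam ^ 2 := by
  have h : 1 < √13 := Real.lt_sqrt_of_sq_lt (by norm_num)
  linarith [lam_sq]

theorem lam_sq_sub_two_mul_lam_sq_sub_three : (lam ^ 2 - 2) * (lam ^ 2 - 3) = 3 := by
  have h : √13 ^ 2 = 13 := Real.sq_sqrt (by norm_num)
  rw [lam_sq]
  linear_combination h / 4

theorem sqrt_lam_sq_sub_four : √(lam ^ 2 - 4) = √(lam ^ 2 - 2) * (lam ^ 2 - 3) / (√3 * lam) := by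
  have hpos := lam_pos
  have hthree := three_lt_lam_sq
  have h : lam ^ 2 - 4 = (lam ^ 2 - 2) * (lam ^ 2 - 3) ^ 2 / (3 * lam ^ 2) := by
    field_simp
    linear_combination (6 - lam ^ 2) * lam_sq_sub_two_mul_lam_sq_sub_three
  rw [h, Real.sqrt_div' _ (by positivity), Real.sqrt_mul' _ (sq_nonneg _),
    Real.sqrt_mul' _ (sq_nonneg _), Real.sqrt_sq (by linarith), Real.sqrt_sq hpos.le]

theorem sqrt_eight_sub_lam_sq : √(8 - lam ^ 2) = √3 * (lam ^ 2 - 2) / lam := by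
  have hpos := lam_pos
  have hthree := three_lt_lam_sq
  have h : 8 - lam ^ 2 = 3 * (lam ^ 2 - 2) ^ 2 / lam ^ 2 := by
    field_simp
    linear_combination -4 * lam_sq_sub_two_mul_lam_sq_sub_three
  rw [h, Real.sqrt_div' _ (sq_nonneg _), Real.sqrt_mul' _ (sq_nonneg _),
    Real.sqrt_sq (by linarith), Real.sqrt_sq hpos.le]

theorem sqrt_lam_sq_sub_one : √(lam ^ 2 - 1) = √(lam ^ 2 - 2) * lam / √3 := by
  have h : lam ^ 2 - 1 = (lam ^ 2 - 2) * lam ^ 2 / 3 := by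
    linear_combination -lam_sq_sub_two_mul_lam_sq_sub_three / 3
  rw [h, Real.sqrt_div' _ (by norm_num), Real.sqrt_mul' _ (sq_nonneg _), Real.sqrt_sq lam_pos.le]

theorem sqrt_five_sub_lam_sq : √(5 - lam ^ 2) = √3 / lam := by
  have hpos := lam_pos
  have h : 5 - lam ^ 2 = 3 / lam ^ 2 := by
    field_simp
    linear_combination -lam_sq_sub_two_mul_lam_sq_sub_three
  rw [h, Real.sqrt_div' _ (sq_nonneg _), Real.sqrt_sq hpos.le]

theorem rho_eq :
    rho = (-(√(lam ^ 2 - 2) * (lam ^ 2 - 3) / (√3 * lam)) +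
      √3 * (lam ^ 2 - 2) / lam * Complex.I) / 2 := by
  rw [rho, sqrt_lam_sq_sub_four, sqrt_eight_sub_lam_sq]
  push_cast
  rfl

theorem tau_eq :
    tau = (-(√(lam ^ 2 - 2) * lam / √3) - √3 / lam * Complex.I) / 2 := by
  rw [tau, sqrt_lam_sq_sub_one, sqrt_five_sub_lam_sq]
  push_cast
  rfl

theorem ofReal_lam_ne_zero : (lam : ℂ) ≠ 0 :=
  Complex.ofReal_ne_zero.mpr lam_pos.ne'

theorem ofReal_lam_sq_sub_two_mul_lam_sq_sub_three :
    ((lam : ℂ) ^ 2 - 2) * ((lam : ℂ) ^ 2 - 3) = 3 :=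
  mod_cast lam_sq_sub_two_mul_lam_sq_sub_three

theorem ofReal_lam_sq_sub_two_ne_zero : (lam : ℂ) ^ 2 - 2 ≠ 0 :=
  left_ne_zero_of_mul (ofReal_lam_sq_sub_two_mul_lam_sq_sub_three.trans_ne three_ne_zero)

theorem ofReal_sqrt_three_ne_zero : ((√3 : ℝ) : ℂ) ≠ 0 :=
  Complex.ofReal_ne_zero.mpr (by positivity)

theorem ofReal_sqrt_three_sq : ((√3 : ℝ) : ℂ) ^ 2 = 3 :=
  mod_cast Real.sq_sqrt (zero_le_three (α := ℝ))

theorem f_zero : f 0 = -Complex.ofReal (1 / √3) * u2 0 + u3Coeff * u3 0 := by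
  have hlam := ofReal_lam_ne_zero
  have htwo := ofReal_lam_sq_sub_two_ne_zero
  have hsqrt := ofReal_sqrt_three_ne_zero
  simp only [f, u2, u3, u3Coeff, rho_eq, Matrix.cons_val_zero]
  push_cast
  field_simp
  linear_combination 3 * (lam ^ 2 - 2) * Complex.I * ofReal_sqrt_three_sq -
    (3 * (lam ^ 2 - 2) * Complex.I + √(lam ^ 2 - 2)) *
      ofReal_lam_sq_sub_two_mul_lam_sq_sub_three

theorem f_one : f 1 = -Complex.ofReal (1 / √3) * u2 1 + u3Coeff * u3 1 := by
  have hlam := ofReal_lam_ne_zero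
  have hsqrt := ofReal_sqrt_three_ne_zero
  simp only [f, u2, u3, u3Coeff, tau_eq, Matrix.cons_val_one, Matrix.cons_val_zero]
  push_cast
  field_simp
  linear_combination √(lam ^ 2 - 2) * (lam ^ 2 - 2) * ofReal_sqrt_three_sq +
    √3 ^ 2 * Complex.I * ofReal_lam_sq_sub_two_mul_lam_sq_sub_three

theorem f_two : f 2 = -Complex.ofReal (1 / √3) * u2 2 + u3Coeff * u3 2 := by
  have htwo := ofReal_lam_sq_sub_two_ne_zero
  have hsqrt := ofReal_sqrt_three_ne_zero
  simp only [f, u2, u3, Matrix.cons_val]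
  push_cast
  field_simp
  linear_combination ofReal_sqrt_three_sq - ofReal_lam_sq_sub_two_mul_lam_sq_sub_three

theorem f_eq : f = (-Complex.ofReal (1 / √3)) • u2 + u3Coeff • u3 := by
  ext k
  fin_cases k
  exacts [f_zero, f_one, f_two]

theorem star_u2 : star u2 = u2 := by
  ext k
  fin_cases k <;> exact Complex.conj_ofReal _

theorem star_u3 : star u3 = u3 := by
  ext k
  fin_cases k
  exacts [Complex.conj_ofReal _, Complex.conj_ofReal _, map_zero (starRingEnd ℂ)]

theorem star_u3Coeff :
    star u3Coeff = Complex.ofReal (√(lam ^ 2 - 2) / (2 * lam)) -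
      Complex.ofReal ((lam ^ 2 - 3) / (2 * lam)) * Complex.I := by
  simp [u3Coeff, sub_eq_add_neg]

theorem asaeda_haagerup_stmt5 :
    f = (-Complex.ofReal (1 / Real.sqrt 3)) • u2 +
        (Complex.ofReal (Real.sqrt (lam ^ 2 - 2) / (2 * lam)) +
          Complex.ofReal ((lam ^ 2 - 3) / (2 * lam)) * Complex.I) • u3 ∧
    (fun k => (starRingEnd ℂ) (f k)) =
      (-Complex.ofReal (1 / Real.sqrt 3)) • u2 +
        (Complex.ofReal (Real.sqrt (lam ^ 2 - 2) / (2 * lam)) -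
          Complex.ofReal ((lam ^ 2 - 3) / (2 * lam)) * Complex.I) • u3 := by
  refine ⟨f_eq, ?_⟩
  change star f = _
  rw [f_eq, star_add, star_smul, star_smul, star_u2, star_u3, star_u3Coeff, star_neg,
    Complex.star_def, Complex.conj_ofReal]

end AsaedaHaagerupStmt5
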